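/- arXiv:2107.10768 — 10 statements merged into one kernel-verified Lean document; each statement's English description precedes it below -/
import Mathlib

section
/- Let (L, ⊢) be a logical structure. The following are equivalent: (1) (L, ⊢) is of Tarski-type; (2) there exists a Suszko set for (L, ⊢); (3) for all Γ ∪ {α} ⊆ L with Γ ⊬ α, there exists a strongly closed extension Σ ⊇ Γ such that Σ ⊬ α; (4) for all Γ, Σ ⊆ L, Σ ⊆ C(Γ) if and only if C(Σ) ⊆ C(Γ). -/
/-!
The four conditions imply one another cyclically, in the order listed in the theorem. The key is
the correspondence between strongly closed sets and the bivaluations of a Suszko set.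

* If `⊢` is of Tarski type, every `C(Γ)` is strongly closed, and so is `L` itself. The
  characteristic functions of the strongly closed sets then form a Suszko set: `C(Γ)` contains `Γ`
  and omits every `α` with `Γ ⊬ α`.
* If `V` is a Suszko set and `v ∈ V`, then `{β | v β = 1}` is strongly closed, so a `v` refuting
  `Γ ⊢ α` gives a strongly closed extension of `Γ` that does not prove `α`.
* Suppose every `Γ ⊬ α` is witnessed by such an extension. If `Δ ⊆ C(Γ)`, then any
  strongly closed extension of `Γ` contains `Δ`, hence `C(Δ)`; so no such extension can refute `Γ ⊢ α` with `α ∈ C(Δ)`. Conversely, `Δ ⊆ C(Δ)`, since a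
  strongly closed extension of `Δ` proves each of its elements.
* Given `Δ ⊆ C(Γ) ↔ C(Δ) ⊆ C(Γ)`, taking `Δ = Γ` yields reflexivity, and the left-to-right
  direction then yields monotonicity and transitivity.
-/

namespace Paper

variable {L : Type*}

/-- The consequence operator `C(Γ) = {α : Γ ⊢ α}`. -/
def COp (T : Set L → L → Prop) (Γ : Set L) : Set L := {α | T Γ α}

/-- `⊢` is reflexive: `α ∈ Γ` implies `Γ ⊢ α`. -/
def Refl (T : Set L → L → Prop) : Prop := ∀ (Γ : Set L) (α : L), α ∈ Γ → T Γ α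

/-- `⊢` is monotone. -/
def Mono (T : Set L → L → Prop) : Prop :=
  ∀ (Γ Δ : Set L) (α : L), T Γ α → Γ ⊆ Δ → T Δ α

/-- `⊢` is transitive. -/
def Trans (T : Set L → L → Prop) : Prop :=
  ∀ (Γ Δ : Set L) (α : L), (∀ β ∈ Δ, T Γ β) → T Δ α → T Γ α

/-- Tarski-type logical structure. -/
def TarskiType (T : Set L → L → Prop) : Prop := Refl T ∧ Mono T ∧ Trans T

/-- `Γ` is closed: `C(Γ) = Γ`. -/
def ClosedSet (T : Set L → L → Prop) (Γ : Set L) : Prop := COp T Γ = Γ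

/-- `Γ` is strongly closed. -/
def StronglyClosed (T : Set L → L → Prop) (Γ : Set L) : Prop :=
  (∀ α ∈ Γ, T Γ α) ∧ ∀ α : L, (∃ Γ' : Set L, Γ' ⊆ Γ ∧ T Γ' α) → α ∈ Γ

/-- The structure satisfies cut. -/
def Cut (T : Set L → L → Prop) : Prop :=
  ∀ (Γ : Set L) (α β : L), T Γ α → T (Γ ∪ {α}) β → T Γ β

/-- The structure satisfies mixed-cut. -/
def MixedCut (T : Set L → L → Prop) : Prop :=
  ∀ (Γ Δ : Set L) (α β : L), T Γ α → T (Δ ∪ {α}) β → T (Γ ∪ Δ) β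

/-- `Γ` is `α`-saturated. -/
def AlphaSat (T : Set L → L → Prop) (Γ : Set L) (α : L) : Prop :=
  ¬ T Γ α ∧ ∀ β : L, β ∉ Γ → T (Γ ∪ {β}) α

/-- `Γ` is saturated: `α`-saturated for some `α`. -/
def Saturated (T : Set L → L → Prop) (Γ : Set L) : Prop := ∃ α : L, AlphaSat T Γ α

/-- `Γ` is relatively maximal in `α`. -/
def RelMax (T : Set L → L → Prop) (Γ : Set L) (α : L) : Prop :=
  ¬ T Γ α ∧ ∀ Δ : Set L, Γ ⊂ Δ → T Δ α

/-- `Γ` is trivial: `C(Γ) = L`. -/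
def IsTrivial (T : Set L → L → Prop) (Γ : Set L) : Prop := COp T Γ = Set.univ

/-- `Γ` is maximal nontrivial. -/
def MaxNontrivial (T : Set L → L → Prop) (Γ : Set L) : Prop :=
  ¬ IsTrivial T Γ ∧ ∀ Δ : Set L, Γ ⊂ Δ → IsTrivial T Δ

/-- Lindenbaum-I-type. -/
def LindI (T : Set L → L → Prop) : Prop :=
  ∀ Γ : Set L, ¬ IsTrivial T Γ → ∃ Δ : Set L, Γ ⊆ Δ ∧ Saturated T Δ

/-- Lindenbaum-II-type. -/
def LindII (T : Set L → L → Prop) : Prop :=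
  ∀ (Γ : Set L) (α : L), ¬ T Γ α → ∃ Δ : Set L, Γ ⊆ Δ ∧ AlphaSat T Δ α

/-- Lindenbaum-III-type. -/
def LindIII (T : Set L → L → Prop) : Prop :=
  ∀ Γ : Set L, ¬ IsTrivial T Γ → ∃ Δ : Set L, Γ ⊆ Δ ∧ MaxNontrivial T Δ

/-- Lindenbaum-IV-type. -/
def LindIV (T : Set L → L → Prop) : Prop :=
  ∀ (Γ : Set L) (α : L), ¬ T Γ α → ∃ Δ : Set L, Γ ⊆ Δ ∧ RelMax T Δ α

/-- `⊢` is finitary. -/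
def Finitary (T : Set L → L → Prop) : Prop :=
  ∀ (Γ : Set L) (α : L), T Γ α → ∃ Γ₀ : Set L, Γ₀ ⊆ Γ ∧ Γ₀.Finite ∧ T Γ₀ α

/-- The consequence relation `⊢_V` induced by a set of bivaluations `V ⊆ {0,1}^L`
(a bivaluation is modelled as a function `L → Bool`, `true` playing the role of `1`). -/
def VdashV (V : Set (L → Bool)) (Γ : Set L) (α : L) : Prop :=
  ∀ v ∈ V, (∀ β ∈ Γ, v β = true) → v α = true

/-- A Suszko set for `(L, ⊢)`: a nonempty set of bivaluations `V` with `⊢ = ⊢_V`. -/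
def SuszkoSet (T : Set L → L → Prop) (V : Set (L → Bool)) : Prop :=
  V.Nonempty ∧ ∀ (Γ : Set L) (α : L), T Γ α ↔ VdashV V Γ α

open Classical in
/-- The characteristic function of a set, as a bivaluation. -/
noncomputable def chi (S : Set L) : L → Bool := fun a => decide (a ∈ S)

/-- The set `ξ_α = {α → β : β ∈ L}` for a binary connective `imp`. -/
def xi (imp : L → L → L) (α : L) : Set L := {x : L | ∃ β : L, x = imp α β}

/-- `Γ` is `→`-saturated: for every `α ∉ Γ`, `ξ_α ⊆ Γ`. -/
def ImpSaturated (imp : L → L → L) (Γ : Set L) : Prop :=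
  ∀ α : L, α ∉ Γ → xi imp α ⊆ Γ

/-- Modus ponens holds for the connective `imp`. -/
def ModusPonens (T : Set L → L → Prop) (imp : L → L → L) : Prop :=
  ∀ (Γ : Set L) (α β : L), T Γ α → T Γ (imp α β) → T Γ β

/-- The set `SCS` of characteristic functions of strongly closed, `β`-saturated
sets (for some `β`). -/
noncomputable def SCS (T : Set L → L → Prop) : Set (L → Bool) :=
  {v | ∃ (Δ : Set L) (β : L), StronglyClosed T Δ ∧ AlphaSat T Δ β ∧ v = chi Δ}

theorem mem_of_stronglyClosed {T : Set L → L → Prop} {S Γ : Set L} {α : L}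
    (hS : StronglyClosed T S) (hΓ : Γ ⊆ S) (h : T Γ α) : α ∈ S :=
  hS.2 α ⟨Γ, hΓ, h⟩

theorem TarskiType.stronglyClosed_COp {T : Set L → L → Prop} (h : TarskiType T) (Γ : Set L) :
    StronglyClosed T (COp T Γ) := by
  obtain ⟨hr, -, ht⟩ := h
  exact ⟨fun α hα => hr _ _ hα, fun α ⟨Γ', hsub, hα⟩ => ht Γ Γ' α hsub hα⟩

theorem TarskiType.exists_suszkoSet {T : Set L → L → Prop} (h : TarskiType T) :
    ∃ V : Set (L → Bool), SuszkoSet T V := by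
  refine ⟨{v | ∃ S, StronglyClosed T S ∧ v = chi S}, ?_, fun Γ α => ⟨?_, fun hV => ?_⟩⟩
  · exact ⟨chi Set.univ, Set.univ, ⟨h.1 _, fun _ _ => trivial⟩, rfl⟩
  · rintro hT v ⟨S, hS, rfl⟩ hv
    simp only [chi, decide_eq_true_eq] at hv ⊢
    exact mem_of_stronglyClosed hS hv hT
  · have hα := hV (chi (COp T Γ)) ⟨_, h.stronglyClosed_COp Γ, rfl⟩
    simp only [chi, decide_eq_true_eq] at hα
    exact hα fun β hβ => h.1 Γ β hβ

theorem SuszkoSet.stronglyClosed {T : Set L → L → Prop} {V : Set (L → Bool)}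
    (hV : SuszkoSet T V) {v : L → Bool} (hv : v ∈ V) :
    StronglyClosed T {β | v β = true} := by
  refine ⟨fun α hα => (hV.2 _ α).2 fun w _ hw => hw α hα, ?_⟩
  rintro α ⟨Γ, hsub, hα⟩
  exact (hV.2 Γ α).1 hα v hv hsub

/-- Characterization of Tarski-type logical structures. -/
theorem tarski_characterization [Nonempty L] (T : Set L → L → Prop) :
    List.TFAE [TarskiType T,
      ∃ V : Set (L → Bool), SuszkoSet T V,
      ∀ (Γ : Set L) (α : L), ¬ T Γ α →
        ∃ Δ : Set L, Γ ⊆ Δ ∧ StronglyClosed T Δ ∧ ¬ T Δ α,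
      ∀ Γ Δ : Set L, Δ ⊆ COp T Γ ↔ COp T Δ ⊆ COp T Γ] := by
  tfae_have 1 → 2 := TarskiType.exists_suszkoSet
  tfae_have 2 → 3 := by
    rintro ⟨V, hV⟩ Γ α hα
    rw [hV.2, VdashV] at hα
    push Not at hα
    obtain ⟨v, hv, hΓ, hvα⟩ := hα
    exact ⟨{β | v β = true}, hΓ, hV.stronglyClosed hv,
      fun h => hvα ((hV.stronglyClosed hv).2 α ⟨_, subset_rfl, h⟩)⟩
  tfae_have 3 → 4 := by
    refine fun h Γ Δ => ⟨fun hsub α hα => ?_, fun hsub β hβ => hsub ?_⟩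
    · by_contra hn
      obtain ⟨S, hΓS, hS, hSα⟩ := h Γ α hn
      have hΔS : Δ ⊆ S := fun β hβ => mem_of_stronglyClosed hS hΓS (hsub hβ)
      exact hSα (hS.1 α (mem_of_stronglyClosed hS hΔS hα))
    · by_contra hn
      obtain ⟨S, hΔS, hS, hSβ⟩ := h Δ β hn
      exact hSβ (hS.1 β (hΔS hβ))
  tfae_have 4 → 1 := by
    intro h
    have hr : Refl T := fun Γ α hα => (h Γ Γ).2 subset_rfl hα
    exact ⟨hr, fun Γ Δ α hα hsub => (h Δ Γ).1 (fun β hβ => hr Δ β (hsub hβ)) hα,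
      fun Γ Δ α hΔ hα => (h Γ Δ).1 hΔ hα⟩
  tfae_finish

end Paper
end

section
/- Let L be a set equipped with a binary operation → : L × L → L and a relation ⊢ between subsets of L and elements of L that is reflexive and satisfies modus ponens. Then every nontrivial →-saturated set Γ ⊆ L is maximal nontrivial and closed. -/
namespace Paper

variable {L : Type*}

/-- A superset `Δ` of a `→`-saturated set `Γ` is trivial as soon as it derives something
outside `Γ`: if `α ∉ Γ`, then every `α → β` lies in `Γ ⊆ Δ`, so modus ponens
in `Δ` yields every `β`. -/
theorem isTrivial_of_derives_notMem {T : Set L → L → Prop} {imp : L → L → L}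
    (hrefl : Refl T) (hmp : ModusPonens T imp) {Γ Δ : Set L} (hsat : ImpSaturated imp Γ)
    (hsub : Γ ⊆ Δ) {α : L} (hα : α ∉ Γ) (hd : T Δ α) : IsTrivial T Δ :=
  Set.eq_univ_of_forall fun β =>
    hmp Δ α β hd (hrefl Δ _ (hsub (hsat α hα ⟨β, rfl⟩)))

/-- For a reflexive `⊢` with a binary connective satisfying modus ponens, every
nontrivial `→`-saturated set is maximal nontrivial and closed. -/
theorem impSaturated_maxNontrivial_closed [Nonempty L] (T : Set L → L → Prop)
    (imp : L → L → L) (hrefl : Refl T) (hmp : ModusPonens T imp)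
    (Γ : Set L) (hnt : ¬ IsTrivial T Γ) (hsat : ImpSaturated imp Γ) :
    MaxNontrivial T Γ ∧ ClosedSet T Γ := by
  refine ⟨⟨hnt, fun Δ hΔ => ?_⟩, Set.Subset.antisymm (fun α hα => ?_) (hrefl Γ)⟩
  · obtain ⟨α, hαΔ, hαΓ⟩ := Set.exists_of_ssubset hΔ
    exact isTrivial_of_derives_notMem hrefl hmp hsat hΔ.subset hαΓ (hrefl Δ α hαΔ)
  · by_contra hαΓ
    exact hnt (isTrivial_of_derives_notMem hrefl hmp hsat subset_rfl hαΓ hα)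

end Paper
end

section
/- Let (L, ⊢) be a Lindenbaum-II-type logical structure and α ∈ L. Then every maximal α-saturated set is relatively maximal in α. -/
namespace Paper

variable {L : Type*}

/-- In a Lindenbaum-II-type logical structure, every maximal `α`-saturated set is
relatively maximal in `α`. -/
theorem maxAlphaSat_relMax_of_lindII [Nonempty L] (T : Set L → L → Prop)
    (h2 : LindII T) (α : L) (Γ : Set L)
    (hsat : AlphaSat T Γ α) (hmax : ∀ Δ : Set L, Γ ⊂ Δ → ¬ AlphaSat T Δ α) :
    RelMax T Γ α := by
  refine ⟨hsat.1, fun Δ hΔ => ?_⟩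
  -- An underivable `Δ ⊋ Γ` would extend to an `α`-saturated set, still properly above `Γ`.
  by_contra hn
  obtain ⟨E, hE, hEs⟩ := h2 Δ α hn
  exact hmax E (hΔ.trans_subset hE) hEs

end Paper
end

section
/- Let (L, ⊢) be a reflexive Lindenbaum-II-type logical structure. If Γ ⊊ L is closed, then Γ = ⋂{C(Σ) : Γ ⊆ Σ and Σ is saturated}. -/
namespace Paper

variable {L : Type*}

/-- In a reflexive Lindenbaum-II-type logical structure, every closed proper subset
`Γ ⊊ L` equals the intersection of `C(Σ)` over its saturated extensions `Σ`. -/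
theorem closed_eq_iInter_COp_saturated [Nonempty L] (T : Set L → L → Prop)
    (hrefl : Refl T) (h2 : LindII T) (Γ : Set L) (hne : Γ ≠ Set.univ)
    (hcl : ClosedSet T Γ) :
    Γ = ⋂ Δ ∈ {Δ : Set L | Γ ⊆ Δ ∧ Saturated T Δ}, COp T Δ := by
  ext α
  simp only [Set.mem_iInter, Set.mem_setOf_eq]
  constructor
  · rintro hα Δ ⟨hΔ, -⟩
    exact hrefl Δ α (hΔ hα)
  · intro h
    rw [← hcl]
    by_contra hα
    -- An `α`-saturated extension of `Γ` is saturated and does not derive `α`.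
    obtain ⟨Δ, hΔ, hsat⟩ := h2 Γ α hα
    exact hsat.1 (h Δ ⟨hΔ, α, hsat⟩)

end Paper
end

section
/- Let (L, ⊢) be a logical structure. The following are equivalent: (1) (L, ⊢) is of Lindenbaum-IV-type; (2) for all Γ ∪ {α} ⊆ L, if Γ ⊬ α then there exists a maximal α-saturated set Σ ⊇ Γ; (3) for all Γ ∪ {α} ⊆ L, the set Lim(Γ, α) = {Σ ⊆ L : Γ ⊆ Σ and Σ ⊬ α} has a maximal element (with respect to inclusion) whenever it is nonempty. -/
/-!
For a fixed `α`, being relatively maximal in `α` is the same as being inclusion-maximal among the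
sets that do not derive `α`. No monotonicity of `⊢` is needed.

A maximal element of `Lim(Γ, α)` is maximal among all sets not deriving `α`, since every superset
of it also contains `Γ`; comparing it with its one-point extensions shows that it is `α`-saturated.
Conversely, a single maximal `α`-saturated set `Δ` could have a proper superset `Θ ⊬ α`
that is not `α`-saturated. The hypothesis is available for every set, though, so `Θ` would extend
to an `α`-saturated set, contradicting the maximality of `Δ`.
-/

namespace Paper

variable {L : Type*}

/-- Characterization of Lindenbaum-IV-type logical structures. -/
theorem lindIV_characterization [Nonempty L] (T : Set L → L → Prop) :
    List.TFAE [LindIV T,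
      ∀ (Γ : Set L) (α : L), ¬ T Γ α →
        ∃ Δ : Set L, Γ ⊆ Δ ∧ AlphaSat T Δ α ∧ ∀ Θ : Set L, Δ ⊂ Θ → ¬ AlphaSat T Θ α,
      ∀ (Γ : Set L) (α : L),
        {Δ : Set L | Γ ⊆ Δ ∧ ¬ T Δ α}.Nonempty →
          ∃ Δ ∈ {Δ : Set L | Γ ⊆ Δ ∧ ¬ T Δ α},
            ∀ Θ ∈ {Δ : Set L | Γ ⊆ Δ ∧ ¬ T Δ α}, Δ ⊆ Θ → Θ = Δ] := by
  tfae_have 1 → 3 := by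
    rintro h Γ α ⟨Δ₀, hΓ, hΔ₀⟩
    obtain ⟨Δ, hΔ, hn, hmax⟩ := h Δ₀ α hΔ₀
    refine ⟨Δ, ⟨hΓ.trans hΔ, hn⟩, fun Θ hΘ hsub => ?_⟩
    by_contra hne
    exact hΘ.2 (hmax Θ (hsub.ssubset_of_ne (Ne.symm hne)))
  tfae_have 3 → 2 := by
    intro h Γ α hΓ
    obtain ⟨Δ, ⟨hsub, hn⟩, hmax⟩ := h Γ α ⟨Γ, subset_rfl, hΓ⟩
    refine ⟨Δ, hsub, ⟨hn, fun β hβ => ?_⟩, fun Θ hΘ hs => ?_⟩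
    · by_contra hc
      have heq := hmax (Δ ∪ {β}) ⟨hsub.trans Set.subset_union_left, hc⟩ Set.subset_union_left
      exact hβ (heq ▸ Set.mem_union_right Δ (Set.mem_singleton β))
    · exact hΘ.ne (hmax Θ ⟨hsub.trans hΘ.subset, hs.1⟩ hΘ.subset).symm
  tfae_have 2 → 1 := by
    intro h Γ α hΓ
    obtain ⟨Δ, hsub, hs, hmax⟩ := h Γ α hΓ
    refine ⟨Δ, hsub, hs.1, fun Θ hΘ => ?_⟩
    by_contra hc
    -- The hypothesis applied to `Θ` yields an `α`-saturated proper superset of `Δ`.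
    obtain ⟨Ξ, hΞ, hΞs, -⟩ := h Θ α hc
    exact hmax Ξ (hΘ.trans_subset hΞ) hΞs
  tfae_finish

end Paper
end

section
/- Let (L, ⊢) be a reflexive logical structure satisfying cut. Suppose further that for all Γ ∪ {α} ⊆ L with α ∉ Γ, if C(Γ ∪ {α}) ⊆ C(Γ) then Γ is closed. Then (L, ⊢) is of Lindenbaum-IV-type. -/
namespace Paper

variable {L : Type*}

/-- A reflexive logical structure satisfying cut, in which `C(Γ ∪ {α}) ⊆ C(Γ)` for
`α ∉ Γ` implies that `Γ` is closed, is of Lindenbaum-IV-type. -/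
theorem lindIV_of_refl_cut [Nonempty L] (T : Set L → L → Prop)
    (hrefl : Refl T) (hcut : Cut T)
    (h : ∀ (Γ : Set L) (α : L), α ∉ Γ → COp T (Γ ∪ {α}) ⊆ COp T Γ → ClosedSet T Γ) :
    LindIV T := by
  -- Cut and `h` make every set closed: if `Γ ⊢ β` with `β ∉ Γ`, cut gives
  -- `C(Γ ∪ {β}) ⊆ C(Γ)`, so `Γ` is closed and contains `β`.
  have closed : ∀ (Γ : Set L) (β : L), T Γ β → β ∈ Γ := by
    intro Γ β hΓ
    by_contra hβ
    have hc : COp T Γ = Γ := h Γ β hβ fun γ hγ => hcut Γ β γ hΓ hγ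
    exact hβ (hc ▸ hΓ : β ∈ Γ)
  intro Γ α hα
  -- Derivability is therefore membership, and the largest set omitting `α` is `{α}ᶜ`.
  refine ⟨{α}ᶜ, ?_, fun hT => closed _ _ hT rfl, fun Δ hΔ => hrefl _ _ ?_⟩
  · rintro β hβ rfl
    exact hα (hrefl _ _ hβ)
  · obtain ⟨β, hβ, hne⟩ := Set.exists_of_ssubset hΔ
    have hβα : β = α := by simpa using hne
    exact hβα ▸ hβ

end Paper
end

section
/- Let (L, ⊢) be a monotone logical structure. Then (L, ⊢) is of Lindenbaum-IV-type if and only if it is of Lindenbaum-II-type. -/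
namespace Paper

variable {L : Type*}

/-- Under monotonicity it suffices to test maximality on one-element extensions, since every
proper superset of `Γ` contains some `Γ ∪ {β}` with `β ∉ Γ`. -/
theorem relMax_iff_alphaSat {T : Set L → L → Prop} (hmono : Mono T) (Γ : Set L) (α : L) :
    RelMax T Γ α ↔ AlphaSat T Γ α := by
  constructor
  · rintro ⟨hΓ, hmax⟩
    exact ⟨hΓ, fun β hβ => hmax _
      ⟨Set.subset_union_left, fun h => hβ (h (Set.mem_union_right Γ rfl))⟩⟩
  · rintro ⟨hΓ, hsat⟩
    refine ⟨hΓ, fun Δ hΔ => ?_⟩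
    obtain ⟨β, hβΔ, hβΓ⟩ := Set.exists_of_ssubset hΔ
    exact hmono _ _ _ (hsat β hβΓ) (Set.union_subset hΔ.1 (Set.singleton_subset_iff.2 hβΔ))

/-- A monotone logical structure is of Lindenbaum-IV-type iff it is of
Lindenbaum-II-type. -/
theorem lindIV_iff_lindII_of_mono [Nonempty L] (T : Set L → L → Prop)
    (hmono : Mono T) : LindIV T ↔ LindII T := by
  simp only [LindIV, LindII, relMax_iff_alphaSat hmono]

end Paper
end

section
/- Let (L, ⊢) be a logical structure. The following are equivalent: (1) (L, ⊢) is of Lindenbaum-III-type; (2) for all nontrivial Γ ⊆ L, there exists a maximal saturated set Σ ⊇ Γ; (3) for all Γ ⊆ L, the set Lim(Γ) = {Σ ⊆ L : Γ ⊆ Σ and Σ is nontrivial} has a maximal element (with respect to inclusion) whenever it is nonempty. -/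
/-!
No property of `⊢` is needed. A maximal nontrivial set is saturated
(`MaxNontrivial.saturated`), and saturated sets are nontrivial (`Saturated.not_isTrivial`), so
maximal nontrivial sets are maximal saturated. Conversely, when every nontrivial set extends to a
saturated one, a maximal saturated set has no nontrivial proper superset. Finally, the maximal
elements of `Lim(Γ)` are exactly the maximal nontrivial sets containing `Γ`, because `Lim(Γ)` is
closed under passing to nontrivial supersets.
-/

namespace Paper

variable {L : Type*}

theorem not_isTrivial_iff (T : Set L → L → Prop) (Γ : Set L) :
    ¬ IsTrivial T Γ ↔ ∃ α, ¬ T Γ α := by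
  simp [IsTrivial, COp, Set.eq_univ_iff_forall]

theorem Saturated.not_isTrivial {T : Set L → L → Prop} {Γ : Set L} (h : Saturated T Γ) :
    ¬ IsTrivial T Γ := by
  obtain ⟨α, hα, -⟩ := h
  exact (not_isTrivial_iff T Γ).2 ⟨α, hα⟩

/-- A maximal nontrivial set is `α`-saturated for every `α` it does not prove, since each
one-point proper extension proves everything. -/
theorem MaxNontrivial.saturated {T : Set L → L → Prop} {Γ : Set L} (h : MaxNontrivial T Γ) :
    Saturated T Γ := by
  obtain ⟨α, hα⟩ := (not_isTrivial_iff T Γ).1 h.1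
  refine ⟨α, hα, fun β hβ => ?_⟩
  have hss : Γ ⊂ Γ ∪ {β} :=
    Set.ssubset_iff_exists.2 ⟨Set.subset_union_left, β, Or.inr rfl, hβ⟩
  exact Set.eq_univ_iff_forall.1 (h.2 _ hss) α

/-- Characterization of Lindenbaum-III-type logical structures. -/
theorem lindIII_characterization [Nonempty L] (T : Set L → L → Prop) :
    List.TFAE [LindIII T,
      ∀ Γ : Set L, ¬ IsTrivial T Γ →
        ∃ Δ : Set L, Γ ⊆ Δ ∧ Saturated T Δ ∧ ∀ Θ : Set L, Δ ⊂ Θ → ¬ Saturated T Θ,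
      ∀ Γ : Set L, {Δ : Set L | Γ ⊆ Δ ∧ ¬ IsTrivial T Δ}.Nonempty →
        ∃ Δ ∈ {Δ : Set L | Γ ⊆ Δ ∧ ¬ IsTrivial T Δ},
          ∀ Θ ∈ {Δ : Set L | Γ ⊆ Δ ∧ ¬ IsTrivial T Δ}, Δ ⊆ Θ → Θ = Δ] := by
  tfae_have 1 → 2 := by
    intro h Γ hΓ
    obtain ⟨Δ, hΓΔ, hΔ⟩ := h Γ hΓ
    exact ⟨Δ, hΓΔ, hΔ.saturated, fun Θ hΘ hs => hs.not_isTrivial (hΔ.2 Θ hΘ)⟩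
  tfae_have 2 → 1 := by
    intro h Γ hΓ
    obtain ⟨Δ, hΓΔ, hs, hmax⟩ := h Γ hΓ
    refine ⟨Δ, hΓΔ, hs.not_isTrivial, fun Θ hΘ => ?_⟩
    -- A nontrivial `Θ ⊃ Δ` would itself extend to a saturated set, against maximality of `Δ`.
    by_contra hnt
    obtain ⟨Ξ, hΘΞ, hsΞ, -⟩ := h Θ hnt
    exact hmax Ξ (hΘ.trans_subset hΘΞ) hsΞ
  tfae_have 1 → 3 := by
    rintro h Γ ⟨Ξ, hΓΞ, hnt⟩
    obtain ⟨Δ, hΞΔ, hΔ⟩ := h Ξ hnt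
    refine ⟨Δ, ⟨hΓΞ.trans hΞΔ, hΔ.1⟩, fun Θ hΘ hsub => ?_⟩
    by_contra hne
    exact hΘ.2 (hΔ.2 Θ (hsub.ssubset_of_ne (Ne.symm hne)))
  tfae_have 3 → 1 := by
    intro h Γ hΓ
    obtain ⟨Δ, ⟨hΓΔ, hnt⟩, hmax⟩ := h Γ ⟨Γ, subset_rfl, hΓ⟩
    refine ⟨Δ, hΓΔ, hnt, fun Θ hΘ => ?_⟩
    by_contra hΘnt
    exact hΘ.ne (hmax Θ ⟨hΓΔ.trans hΘ.subset, hΘnt⟩ hΘ.subset).symm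
  tfae_finish

end Paper
end

section
/- Let (L, ⊢) be a logical structure. The following are equivalent: (1) (L, ⊢) is of TL-4-type (i.e., both of Tarski-type and of Lindenbaum-IV-type); (2) for all Γ ∪ {α} ⊆ L with Γ ⊬ α, there exists a strongly closed Σ ⊇ Γ which is relatively maximal in α; (3) for all Γ ∪ {α} ⊆ L with Γ ⊬ α, there exists a strongly closed α-saturated Σ ⊇ Γ; (4) for all Γ ∪ {α} ⊆ L with Γ ⊬ α, there exist β ∈ L and a strongly closed β-saturated Σ ⊇ Γ such that Σ ⊬ α and {β} ⊢ α; (5) for each α ∈ L there exists β ∈ L such that, for any Γ ⊆ L, if Γ ⊬ α then there exists a strongly closed β-saturated Σ ⊇ Γ with Σ ⊬ α. -/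
/-!
Conditions are numbered by their position in the `TFAE` list.

The key point (`tarskiType_of_stronglyClosed`) is that as soon as every non-consequence `Γ ⊬ α` is
witnessed by a strongly closed `Δ ⊇ Γ` with `Δ ⊬ α`, the structure is of Tarski-type: whatever a
subset of `Δ` derives already lies in `Δ`. So each of the conditions (2)–(5) yields the Tarski
axioms. In a Tarski-type structure, relatively maximal sets are strongly closed
(`stronglyClosed_of_relMax`), "`α`-saturated" is the same as "relatively maximal in `α`", and a
`β`-saturated set not deriving `α` is `α`-saturated when `{β} ⊢ α`; this gives (4) ⇒ (3).
Finally, the `β` attached to `α` in (5) satisfies `{β} ⊢ α`: otherwise (5) applied to `Γ = {β}`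
gives a `β`-saturated set containing `β`, against reflexivity.
-/

namespace Paper

variable {L : Type*}

theorem tarskiType_of_stronglyClosed {T : Set L → L → Prop}
    (h : ∀ (Γ : Set L) (α : L), ¬ T Γ α → ∃ Δ : Set L, Γ ⊆ Δ ∧ StronglyClosed T Δ ∧ ¬ T Δ α) :
    TarskiType T := by
  refine ⟨fun Γ α hα => ?_, fun Γ Δ α hα hΓ => ?_, fun Γ Δ α hΔ hα => ?_⟩ <;> by_contra hn <;>
    obtain ⟨S, hS, hc, hnS⟩ := h _ _ hn
  · exact hnS (hc.1 _ (hS hα))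
  · exact hnS (hc.1 _ (hc.2 _ ⟨Γ, hΓ.trans hS, hα⟩))
  · exact hnS (hc.1 _ (hc.2 _ ⟨Δ, fun β hβ => hc.2 _ ⟨Γ, hS, hΔ β hβ⟩, hα⟩))

theorem alphaSat_of_relMax {T : Set L → L → Prop} {Γ : Set L} {α : L} (h : RelMax T Γ α) :
    AlphaSat T Γ α := by
  refine ⟨h.1, fun β hβ => h.2 _ ⟨Set.subset_union_left, fun hs => hβ (hs ?_)⟩⟩
  exact Or.inr rfl

theorem relMax_of_alphaSat {T : Set L → L → Prop} (hT : TarskiType T) {Γ : Set L} {α : L}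
    (h : AlphaSat T Γ α) : RelMax T Γ α := by
  refine ⟨h.1, fun Δ hΔ => ?_⟩
  obtain ⟨β, hβ, hβΓ⟩ := Set.exists_of_ssubset hΔ
  exact hT.2.1 _ _ _ (h.2 β hβΓ) (Set.union_subset hΔ.1 (Set.singleton_subset_iff.2 hβ))

theorem stronglyClosed_of_relMax {T : Set L → L → Prop} (hT : TarskiType T) {Γ : Set L} {α : L}
    (h : RelMax T Γ α) : StronglyClosed T Γ := by
  obtain ⟨hr, hm, ht⟩ := hT
  refine ⟨fun β hβ => hr _ _ hβ, ?_⟩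
  rintro γ ⟨Γ', hΓ', hγ⟩
  by_contra hn
  -- Otherwise `Γ ∪ {γ} ⊢ α`, and cutting `γ` yields `Γ ⊢ α`.
  refine h.1 (ht Γ (Γ ∪ {γ}) α ?_ ((alphaSat_of_relMax h).2 γ hn))
  rintro β (hβ | rfl)
  · exact hr _ _ hβ
  · exact hm _ _ _ hγ hΓ'

/-- Characterization of TL-4-type logical structures. -/
theorem tl4_characterization [Nonempty L] (T : Set L → L → Prop) :
    List.TFAE [TarskiType T ∧ LindIV T,
      ∀ (Γ : Set L) (α : L), ¬ T Γ α →
        ∃ Δ : Set L, Γ ⊆ Δ ∧ StronglyClosed T Δ ∧ RelMax T Δ α,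
      ∀ (Γ : Set L) (α : L), ¬ T Γ α →
        ∃ Δ : Set L, Γ ⊆ Δ ∧ StronglyClosed T Δ ∧ AlphaSat T Δ α,
      ∀ (Γ : Set L) (α : L), ¬ T Γ α →
        ∃ (β : L) (Δ : Set L), Γ ⊆ Δ ∧ StronglyClosed T Δ ∧ AlphaSat T Δ β ∧
          ¬ T Δ α ∧ T {β} α,
      ∀ α : L, ∃ β : L, ∀ Γ : Set L, ¬ T Γ α →
        ∃ Δ : Set L, Γ ⊆ Δ ∧ StronglyClosed T Δ ∧ AlphaSat T Δ β ∧ ¬ T Δ α] := by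
  tfae_have 1 → 2 := by
    rintro ⟨hT, hL⟩ Γ α hn
    obtain ⟨Δ, hΓ, hΔ⟩ := hL Γ α hn
    exact ⟨Δ, hΓ, stronglyClosed_of_relMax hT hΔ, hΔ⟩
  tfae_have 2 → 3 := by
    intro h Γ α hn
    obtain ⟨Δ, hΓ, hc, hΔ⟩ := h Γ α hn
    exact ⟨Δ, hΓ, hc, alphaSat_of_relMax hΔ⟩
  tfae_have 3 → 1 := by
    intro h
    have hT : TarskiType T := tarskiType_of_stronglyClosed fun Γ α hn => by
      obtain ⟨Δ, hΓ, hc, hΔ⟩ := h Γ α hn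
      exact ⟨Δ, hΓ, hc, hΔ.1⟩
    refine ⟨hT, fun Γ α hn => ?_⟩
    obtain ⟨Δ, hΓ, -, hΔ⟩ := h Γ α hn
    exact ⟨Δ, hΓ, relMax_of_alphaSat hT hΔ⟩
  tfae_have 3 → 5 := by
    intro h α
    refine ⟨α, fun Γ hn => ?_⟩
    obtain ⟨Δ, hΓ, hc, hΔ⟩ := h Γ α hn
    exact ⟨Δ, hΓ, hc, hΔ, hΔ.1⟩
  tfae_have 5 → 4 := by
    intro h Γ α hn
    obtain ⟨β, hβ⟩ := h α
    obtain ⟨Δ, hΓ, hc, hΔ, hnα⟩ := hβ Γ hn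
    refine ⟨β, Δ, hΓ, hc, hΔ, hnα, ?_⟩
    by_contra hb
    obtain ⟨S, hS, hcS, hβS, -⟩ := hβ {β} hb
    exact hβS.1 (hcS.1 β (hS rfl))
  tfae_have 4 → 3 := by
    intro h Γ α hn
    obtain ⟨hr, hm, ht⟩ : TarskiType T := tarskiType_of_stronglyClosed fun Γ α hn => by
      obtain ⟨_, Δ, hΓ, hc, -, hnα, -⟩ := h Γ α hn
      exact ⟨Δ, hΓ, hc, hnα⟩
    obtain ⟨β, Δ, hΓ, hc, hΔ, hnα, hβα⟩ := h Γ α hn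
    refine ⟨Δ, hΓ, hc, hnα, fun γ hγ => ht _ {β} _ ?_ hβα⟩
    rintro _ rfl
    exact hΔ.2 γ hγ
  tfae_finish

end Paper
end

section
/- Adequacy and minimality for TL-4-type structures: let (L, ⊢) be a logical structure of TL-4-type (both Tarski-type and Lindenbaum-IV-type), and let SCS be the set of characteristic functions χ_Σ : L → {0,1} of all Σ ⊆ L that are strongly closed and β-saturated for some β ∈ L. Then (a) ⊢ equals ⊢_SCS; (b) for any B ⊆ SCS, ⊢ ⊆ ⊢_B; and (c) if B ⊊ SCS then ⊢ ⊊ ⊢_B. -/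
/-!
Soundness of a subset `B` of `SCS T` is immediate from strong closure: a strongly closed set
containing `Γ` contains every consequence of `Γ`. For completeness, an underivable `α` admits a
relatively maximal set `Δ ⊇ Γ`; such a `Δ` is `α`-saturated, and
transitivity makes it strongly closed (`AlphaSat.stronglyClosed`), so `chi Δ`
lies in `SCS T` and refutes `α`. For minimality, if `chi Δ` with `Δ` `β`-saturated is
missing from `B`, then `Δ ⊬ β`, yet any other strongly closed `S ⊇ Δ` contains some `γ ∉ Δ`,
hence derives `β` by saturation of `Δ` and so contains it; thus `Δ ⊢_B β`.
-/

namespace Paper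

variable {L : Type*}

@[simp] lemma chi_eq_true (S : Set L) (a : L) : chi S a = true ↔ a ∈ S := by
  simp [chi]

lemma RelMax.alphaSat {T : Set L → L → Prop} {Δ : Set L} {α : L} (h : RelMax T Δ α) :
    AlphaSat T Δ α := by
  refine ⟨h.1, fun γ hγ => h.2 _ ⟨Set.subset_union_left, fun hs => hγ (hs ?_)⟩⟩
  exact Or.inr rfl

/-- If `Δ ⊢ x` with `x ∉ Δ`, then saturation gives `Δ ∪ {x} ⊢ α`, whence `Δ ⊢ α` by
transitivity, contrary to `Δ ⊬ α`. -/
lemma AlphaSat.stronglyClosed {T : Set L → L → Prop} (ht : TarskiType T) {Δ : Set L} {α : L}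
    (h : AlphaSat T Δ α) : StronglyClosed T Δ := by
  obtain ⟨hr, hm, htr⟩ := ht
  refine ⟨fun x hx => hr Δ x hx, ?_⟩
  rintro x ⟨Γ', hsub, hx⟩
  by_contra hxΔ
  refine h.1 (htr Δ (Δ ∪ {x}) α ?_ (h.2 x hxΔ))
  rintro y (hy | rfl)
  · exact hr Δ y hy
  · exact hm Γ' Δ y hx hsub

lemma vdashV_of_subset_SCS {T : Set L → L → Prop} {B : Set (L → Bool)} (hB : B ⊆ SCS T)
    {Γ : Set L} {α : L} (h : T Γ α) : VdashV B Γ α := by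
  intro v hv hΓ
  obtain ⟨Δ, β, hc, -, rfl⟩ := hB hv
  simp only [chi_eq_true] at hΓ ⊢
  exact hc.2 α ⟨Γ, hΓ, h⟩

/-- Adequacy and minimality for TL-4-type logical structures: `⊢` equals `⊢_SCS`,
`⊢ ⊆ ⊢_B` for every `B ⊆ SCS`, and `⊢ ⊊ ⊢_B` for every proper `B ⊊ SCS`. -/
theorem tl4_adequacy_minimality [Nonempty L] (T : Set L → L → Prop)
    (ht : TarskiType T) (h4 : LindIV T) :
    (∀ (Γ : Set L) (α : L), T Γ α ↔ VdashV (SCS T) Γ α) ∧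
    (∀ B : Set (L → Bool), B ⊆ SCS T →
      ∀ (Γ : Set L) (α : L), T Γ α → VdashV B Γ α) ∧
    (∀ B : Set (L → Bool), B ⊂ SCS T →
      (∀ (Γ : Set L) (α : L), T Γ α → VdashV B Γ α) ∧
      ¬ (∀ (Γ : Set L) (α : L), VdashV B Γ α → T Γ α)) := by
  refine ⟨fun Γ α => ⟨vdashV_of_subset_SCS subset_rfl, fun h => ?_⟩,
    fun B hB Γ α => vdashV_of_subset_SCS hB,
    fun B hB => ⟨fun Γ α => vdashV_of_subset_SCS hB.subset, fun hall => ?_⟩⟩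
  · by_contra hn
    obtain ⟨Δ, hsub, hmax⟩ := h4 Γ α hn
    have hsat := hmax.alphaSat
    have hα := h (chi Δ) ⟨Δ, α, hsat.stronglyClosed ht, hsat, rfl⟩
      (fun γ hγ => (chi_eq_true Δ γ).2 (hsub hγ))
    exact hmax.1 (ht.1 Δ α ((chi_eq_true Δ α).1 hα))
  · obtain ⟨v, ⟨Δ, β, -, hsat, rfl⟩, hvB⟩ := Set.exists_of_ssubset hB
    refine hsat.1 (hall Δ β fun w hw hΔ => ?_)
    obtain ⟨S, -, hS, -, rfl⟩ := hB.subset hw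
    simp only [chi_eq_true] at hΔ ⊢
    -- `S ≠ Δ` because `chi S ∈ B` while `chi Δ ∉ B`, so `S` has an element outside `Δ`.
    have hne : ¬ S ⊆ Δ := fun hs => hvB (Set.Subset.antisymm hs hΔ ▸ hw)
    obtain ⟨γ, hγS, hγΔ⟩ := Set.not_subset.1 hne
    exact hS.2 β ⟨Δ ∪ {γ}, Set.union_subset hΔ (Set.singleton_subset_iff.2 hγS), hsat.2 γ hγΔ⟩

end Paper
end
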